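/- For N ∈ ℕ, N ≥ 4, the closed subspace Y_N of L₁[0,1] generated by the constants and the functions g_{n,k} fails the Daugavet property: there exist a functional g* ∈ Y_N* of norm ≤ 1, an ε > 0 with the slice S(g*, ε) ∩ B(Y_N) nonempty, such that every f in this slice satisfies ‖f − 1‖ ≤ 2 − ε (where 1 is the constant function), so condition (ii) of the slice characterisation of the Daugavet property fails for Y_N. -/

import Mathlib

open MeasureTheory

/-- The exponent of the dyadic scale of the `n`-th generation: `0` for `n = 0`
(so `I_{0,1} = [0,1)`) and `N^n` for `n ≥ 1`. -/
def expn (N n : ℕ) : ℕ := if n = 0 then 0 else N ^ n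

/-- The function `g_{n,k}` from the construction: the translate by `(k-1)/2^{expn N n}` of
`(2^{N^{n+1} - expn N n} - 1)·χ_{I_{N^{n+1},1}} - χ_{I_{expn N n,1} ∖ I_{N^{n+1},1}}`. -/
noncomputable def gNK (N n k : ℕ) (t : ℝ) : ℝ :=
  let s : ℝ := t - ((k : ℝ) - 1) / 2 ^ expn N n
  if s ∈ Set.Ico (0 : ℝ) (1 / 2 ^ N ^ (n + 1)) then
    (2 : ℝ) ^ N ^ (n + 1) / 2 ^ expn N n - 1
  else if s ∈ Set.Ico (0 : ℝ) (1 / 2 ^ expn N n) then -1 else 0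

/-- The peak set `P = ∪ₙ Pₙ` where `Pₙ = {t : Σₖ g_{n,k}(t) > 0}`. -/
def Pset (N : ℕ) : Set ℝ :=
  ⋃ n : ℕ, {t : ℝ | 0 < ∑ k ∈ Finset.Icc 1 (2 ^ expn N n), gNK N n k t}

/-- Lebesgue measure restricted to `[0,1)`, the underlying measure of `L₁[0,1]`. -/
noncomputable def muI : Measure ℝ := volume.restrict (Set.Ico (0 : ℝ) 1)

/-- `Y_N ⊆ L₁[0,1]`: the closed linear span of the constants and the functions `g_{n,k}`,
`n ∈ ℕ`, `1 ≤ k ≤ 2^{N^n}`. -/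
noncomputable def YN (N : ℕ) : Submodule ℝ (Lp ℝ 1 muI) :=
  (Submodule.span ℝ {f : Lp ℝ 1 muI |
      (∃ c : ℝ, ∀ᵐ t ∂muI, f t = c) ∨
      (∃ n k : ℕ, 1 ≤ k ∧ k ≤ 2 ^ expn N n ∧
        ∀ᵐ t ∂muI, f t = gNK N n k t)}).topologicalClosure

/-!
A function `f ∈ span {1, g_{n,k}}` is its mean plus a finite martingale `G` whose increments are
spikes: each cell of generation `n` receives a mean-zero increment which is constant on the first
child and constant on the union of the other children. Give a point the sign `-1` once it has been
in some `Pₙ`, and `1` before. By the triangle inequality on each cell the integral of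
`sign * |G|`, which starts at `0`, does not increase from one generation to the next, so
`∫_{Pᶜ} |f - ∫ f| ≤ ∫_P |f - ∫ f|`. This inequality is stable under `L¹` limits, hence holds on
all of `Y_N`.

If moreover `‖f‖ ≤ 1` and `∫_{Pᶜ} f ≥ 1 - 2|P|`, then `∫_P |f| ≤ 2|P|`, so that `∫ f ≥ 1 - 4|P|`
and `‖f - ∫ f‖ ≤ 2 (∫_P |f| + |P|) ≤ 6|P|`. Altogether `‖f - 1‖ ≤ 10|P|`, which is at most
`2 - 2|P|` as soon as `|P| ≤ 1/6`.
-/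

open Filter Finset

section Floor

theorem sub_div_mem_Ico_iff_floor_mul_eq {m t : ℝ} (hm : 0 < m) (ht : 0 ≤ t) (j : ℕ) :
    t - j / m ∈ Set.Ico 0 (1 / m) ↔ ⌊m * t⌋₊ = j := by
  rw [Nat.floor_eq_iff (by positivity), Set.mem_Ico, sub_nonneg, sub_lt_iff_lt_add',
    ← add_div, div_le_iff₀ hm, lt_div_iff₀ hm, mul_comm t]

theorem floor_mul_lt {M : ℕ} (hM : 0 < M) {t : ℝ} (ht : t ∈ Set.Ico (0 : ℝ) 1) :
    ⌊M * t⌋₊ < M := by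
  rw [Nat.floor_lt (mul_nonneg M.cast_nonneg ht.1)]
  exact mul_lt_of_lt_one_right (by exact_mod_cast hM) ht.2

theorem measurable_floor_mul (M : ℕ) : Measurable fun t : ℝ ↦ ⌊M * t⌋₊ := by
  fun_prop

theorem measurableSet_floor_mul_eq (M i : ℕ) : MeasurableSet {t : ℝ | ⌊M * t⌋₊ = i} :=
  measurable_floor_mul M (measurableSet_singleton i)

instance : IsProbabilityMeasure muI := ⟨by simp [muI]⟩

theorem ae_muI_mem_Ico : ∀ᵐ t ∂muI, t ∈ Set.Ico (0 : ℝ) 1 :=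
  ae_restrict_mem measurableSet_Ico

theorem measureReal_floor_mul_eq {M i : ℕ} (hi : i < M) :
    muI.real {t | ⌊M * t⌋₊ = i} = 1 / M := by
  have hM : (0 : ℝ) < M := by exact_mod_cast Nat.zero_lt_of_lt hi
  have hiM : (i + 1 : ℝ) ≤ M := by exact_mod_cast hi
  have hset : {t : ℝ | ⌊M * t⌋₊ = i} ∩ Set.Ico 0 1 = Set.Ico (i / M : ℝ) (i / M + 1 / M) := by
    ext t
    have hcell (ht : 0 ≤ t) : ⌊M * t⌋₊ = i ↔ t ∈ Set.Ico (i / M : ℝ) (i / M + 1 / M) := by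
      rw [← sub_div_mem_Ico_iff_floor_mul_eq hM ht, Set.mem_Ico, Set.mem_Ico, sub_nonneg,
        sub_lt_iff_lt_add']
    refine ⟨fun ⟨hfloor, ht⟩ ↦ (hcell ht.1).1 hfloor, fun ht ↦ ?_⟩
    have ht₀ : 0 ≤ t := le_trans (by positivity) ht.1
    refine ⟨(hcell ht₀).2 ht, ht₀, ht.2.trans_le ?_⟩
    rwa [← add_div, div_le_one hM]
  rw [muI, measureReal_restrict_apply (measurableSet_floor_mul_eq M i), hset,
    Real.volume_real_Ico_of_le (by simp), add_sub_cancel_left]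

theorem comp_floor_mul_ae_eq_sum_indicator {M : ℕ} (hM : 0 < M) (φ : ℕ → ℝ) :
    (fun t : ℝ ↦ φ ⌊M * t⌋₊) =ᵐ[muI]
      fun t ↦ ∑ i ∈ range M, {t : ℝ | ⌊M * t⌋₊ = i}.indicator (fun _ ↦ φ i) t := by
  filter_upwards [ae_muI_mem_Ico] with t ht
  have hlt := floor_mul_lt hM ht
  simp [Set.indicator_apply, hlt]

theorem integrable_indicator_floor_mul (M i : ℕ) (c : ℝ) :
    Integrable ({t : ℝ | ⌊M * t⌋₊ = i}.indicator fun _ ↦ c) muI :=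
  (integrable_const c).indicator (measurableSet_floor_mul_eq M i)

theorem integrable_comp_floor_mul {M : ℕ} (hM : 0 < M) (φ : ℕ → ℝ) :
    Integrable (fun t : ℝ ↦ φ ⌊M * t⌋₊) muI :=
  (integrable_finsetSum _ fun i _ ↦ integrable_indicator_floor_mul M i (φ i)).congr
    (comp_floor_mul_ae_eq_sum_indicator hM φ).symm

theorem integral_comp_floor_mul {M : ℕ} (hM : 0 < M) (φ : ℕ → ℝ) :
    ∫ t, φ ⌊M * t⌋₊ ∂muI = (∑ i ∈ range M, φ i) / M := by
  rw [integral_congr_ae (comp_floor_mul_ae_eq_sum_indicator hM φ),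
    integral_finsetSum _ fun i _ ↦ integrable_indicator_floor_mul M i (φ i), sum_div]
  refine sum_congr rfl fun i hi ↦ ?_
  rw [integral_indicator_const _ (measurableSet_floor_mul_eq M i),
    measureReal_floor_mul_eq (mem_range.1 hi), smul_eq_mul, one_div_mul_eq_div]

end Floor

theorem sum_range_mul_ite_dvd (A : ℕ) {d : ℕ} (hd : 0 < d) (u v : ℕ → ℝ) :
    ∑ i ∈ range (A * d), (if d ∣ i then u (i / d) else v (i / d)) =
      ∑ j ∈ range A, (u j + (d - 1) * v j) := by
  obtain ⟨e, rfl⟩ := Nat.exists_eq_add_one.2 hd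
  induction A with
  | zero => simp
  | succ A ih =>
    have hchild (r : ℕ) (hr : r ∈ range e) :
        (if e + 1 ∣ A * (e + 1) + (r + 1) then u ((A * (e + 1) + (r + 1)) / (e + 1))
          else v ((A * (e + 1) + (r + 1)) / (e + 1))) = v A := by
      have hlt : r + 1 < e + 1 := Nat.succ_lt_succ (mem_range.1 hr)
      rw [if_neg, mul_comm, Nat.mul_add_div hd, Nat.div_eq_of_lt hlt, add_zero]
      rw [Nat.dvd_add_right (Nat.dvd_mul_left _ _)]
      exact Nat.not_dvd_of_pos_of_lt r.succ_pos hlt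
    rw [Nat.succ_mul, sum_range_add, ih, sum_range_succ _ A, sum_range_succ', sum_congr rfl hchild]
    simp [add_comm]

section Adic

variable (D : ℕ → ℕ)

/-- The number of cells of generation `n` when every cell of generation `m` is cut into `D m`
equal cells of generation `m + 1`. -/
def adicScale (n : ℕ) : ℕ := ∏ m ∈ range n, D m

/-- The index, counted from `0`, of the cell of generation `n` containing `t ∈ [0, 1)`. -/
noncomputable def adicCell (n : ℕ) (t : ℝ) : ℕ := ⌊adicScale D n * t⌋₊

/-- The union of the first children of the cells of generation `n`: the set `Pₙ` of the paper. -/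
def peak (n : ℕ) : Set ℝ := {t | D n ∣ adicCell D (n + 1) t}

/-- The union of the peaks of all generations: the set `P` of the paper. -/
def peakSet : Set ℝ := ⋃ n, peak D n

variable {D}

theorem adicScale_succ (n : ℕ) : adicScale D (n + 1) = adicScale D n * D n :=
  prod_range_succ D n

theorem adicScale_pos (hD : ∀ n, 0 < D n) (n : ℕ) : 0 < adicScale D n :=
  prod_pos fun m _ ↦ hD m

theorem adicCell_lt (hD : ∀ n, 0 < D n) (n : ℕ) {t : ℝ} (ht : t ∈ Set.Ico (0 : ℝ) 1) :
    adicCell D n t < adicScale D n :=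
  floor_mul_lt (adicScale_pos hD n) ht

theorem adicCell_succ_div {n : ℕ} (hD : 0 < D n) (t : ℝ) :
    adicCell D (n + 1) t / D n = adicCell D n t := by
  rw [adicCell, adicCell, adicScale_succ, mul_comm (adicScale D n), Nat.cast_mul, mul_assoc,
    Nat.cast_mul_floor_div_cancel hD.ne']

theorem adicCell_succ_eq_mul_iff {n : ℕ} (hD : 0 < D n) (t : ℝ) (j : ℕ) :
    adicCell D (n + 1) t = j * D n ↔ adicCell D n t = j ∧ t ∈ peak D n := by
  rw [← adicCell_succ_div hD, peak, Set.mem_ofPred_eq]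
  constructor
  · intro h
    rw [h]
    exact ⟨Nat.mul_div_cancel _ hD, Nat.dvd_mul_left _ _⟩
  · rintro ⟨rfl, hdvd⟩
    exact (Nat.div_mul_cancel hdvd).symm

theorem integrable_comp_adicCell (hD : ∀ n, 0 < D n) (n : ℕ) (φ : ℕ → ℝ) :
    Integrable (fun t ↦ φ (adicCell D n t)) muI :=
  integrable_comp_floor_mul (adicScale_pos hD n) φ

theorem integral_comp_adicCell (hD : ∀ n, 0 < D n) (n : ℕ) (φ : ℕ → ℝ) :
    ∫ t, φ (adicCell D n t) ∂muI = (∑ i ∈ range (adicScale D n), φ i) / adicScale D n :=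
  integral_comp_floor_mul (adicScale_pos hD n) φ

variable (D) in
theorem measurableSet_peak (n : ℕ) : MeasurableSet (peak D n) :=
  measurable_floor_mul (adicScale D (n + 1)) (.of_discrete (s := {i | D n ∣ i}))

variable (D) in
theorem measurableSet_peakSet : MeasurableSet (peakSet D) :=
  .iUnion (measurableSet_peak D)

theorem measureReal_peak (hD : ∀ n, 0 < D n) (n : ℕ) : muI.real (peak D n) = 1 / D n := by
  have hscale : (adicScale D n : ℝ) ≠ 0 := by exact_mod_cast (adicScale_pos hD n).ne'
  calc muI.real (peak D n)
      = ∫ t, (if D n ∣ adicCell D (n + 1) t then (1 : ℝ) else 0) ∂muI := by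
        rw [← integral_indicator_one (measurableSet_peak D n)]
        simp only [Set.indicator_apply, peak, Set.mem_ofPred_eq, Pi.one_apply]
    _ = (∑ _j ∈ range (adicScale D n), (1 + (D n - 1) * 0 : ℝ)) / adicScale D (n + 1) := by
        rw [integral_comp_adicCell hD (n + 1) fun i ↦ if D n ∣ i then 1 else 0,
          ← sum_range_mul_ite_dvd _ (hD n) (fun _ ↦ 1) fun _ ↦ 0, adicScale_succ]
    _ = 1 / D n := by
        simp only [mul_zero, add_zero, sum_const, card_range, nsmul_eq_mul, mul_one,
          adicScale_succ, Nat.cast_mul]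
        exact div_mul_cancel_left₀ hscale _ |>.trans (one_div _).symm

theorem measureReal_peakSet_pos (hD : ∀ n, 0 < D n) : 0 < muI.real (peakSet D) := by
  have h₀ : (0 : ℝ) < D 0 := by exact_mod_cast hD 0
  calc (0 : ℝ) < 1 / D 0 := by positivity
    _ = muI.real (peak D 0) := (measureReal_peak hD 0).symm
    _ ≤ muI.real (peakSet D) := measureReal_mono (Set.subset_iUnion (peak D) 0)

theorem measureReal_peakSet_le_tsum (hD : ∀ n, 0 < D n) (hs : Summable fun n ↦ 1 / (D n : ℝ)) :
    muI.real (peakSet D) ≤ ∑' n, 1 / (D n : ℝ) := by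
  refine ENNReal.toReal_le_of_le_ofReal (tsum_nonneg fun n ↦ by positivity) ?_
  rw [ENNReal.ofReal_tsum_of_nonneg (fun n ↦ by positivity) hs]
  refine (measure_iUnion_le _).trans_eq (tsum_congr fun n ↦ ?_)
  rw [← measureReal_peak hD n, ofReal_measureReal]

end Adic

section SpikeMartingale

/-- The values taken by `∑ₖ g_{n,k}` on the cells of the next generation: positive on the first of
every `d` consecutive cells, `-1` on the others, with mean zero. -/
def spike (d i : ℕ) : ℝ := if d ∣ i then d - 1 else -1

variable (D : ℕ → ℕ) (a : ℕ → ℕ → ℝ)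

/-- The value on the `i`-th cell of generation `n` of `∑_{m < n} ∑ⱼ a m j • g_{m,j}`, cells being
counted from `0`. -/
def spikeMartingale : ℕ → ℕ → ℝ
  | 0, _ => 0
  | n + 1, i => spikeMartingale n (i / D n) + a n (i / D n) * spike (D n) i

/-- The sign attached to the `i`-th cell of generation `n`: `-1` if the cell lies in a peak of a
generation before `n`, and `1` otherwise. -/
def peakSign : ℕ → ℕ → ℝ
  | 0, _ => 1
  | n + 1, i => if D n ∣ i then -1 else peakSign n (i / D n)

variable {D}

theorem spikeMartingale_succ (n i : ℕ) :
    spikeMartingale D a (n + 1) i =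
      if D n ∣ i then spikeMartingale D a n (i / D n) + a n (i / D n) * (D n - 1)
      else spikeMartingale D a n (i / D n) - a n (i / D n) := by
  rw [spikeMartingale, spike]
  split_ifs <;> ring

theorem spikeMartingale_adicCell (hD : ∀ n, 0 < D n) (n : ℕ) (t : ℝ) :
    spikeMartingale D a n (adicCell D n t) =
      ∑ m ∈ range n, a m (adicCell D m t) * spike (D m) (adicCell D (m + 1) t) := by
  induction n with
  | zero => simp [spikeMartingale]
  | succ n ih => rw [spikeMartingale, adicCell_succ_div (hD n), ih, sum_range_succ]

theorem sum_spikeMartingale (hD : ∀ n, 0 < D n) (n : ℕ) :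
    ∑ i ∈ range (adicScale D n), spikeMartingale D a n i = 0 := by
  induction n with
  | zero => simp [spikeMartingale]
  | succ n ih =>
    simp only [spikeMartingale_succ, adicScale_succ]
    rw [sum_range_mul_ite_dvd _ (hD n)
      (fun j ↦ spikeMartingale D a n j + a n j * (D n - 1))
      fun j ↦ spikeMartingale D a n j - a n j]
    calc _ = ∑ j ∈ range (adicScale D n), D n * spikeMartingale D a n j :=
          sum_congr rfl fun j _ ↦ by ring
      _ = 0 := by rw [← mul_sum, ih, mul_zero]

theorem peakSign_eq_one_or_neg_one (n i : ℕ) : peakSign D n i = 1 ∨ peakSign D n i = -1 := by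
  induction n generalizing i with
  | zero => exact .inl rfl
  | succ n ih =>
    rw [peakSign]
    split_ifs
    · exact .inr rfl
    · exact ih _

theorem peakSign_adicCell_of_notMem_peakSet (hD : ∀ n, 0 < D n) (n : ℕ) {t : ℝ}
    (ht : t ∉ peakSet D) : peakSign D n (adicCell D n t) = 1 := by
  induction n with
  | zero => rfl
  | succ n ih =>
    have htn : ¬D n ∣ adicCell D (n + 1) t := fun h ↦ ht (Set.mem_iUnion_of_mem n h)
    rw [peakSign, if_neg htn, adicCell_succ_div (hD n), ih]

-- The triangle inequality for `d * b = (b + x * (d - 1)) + (d - 1) * (b - x)`.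
theorem neg_abs_add_mul_sign_mul_abs_le {d s : ℝ} (hd : 1 ≤ d) (hs : s = 1 ∨ s = -1) (b x : ℝ) :
    -|b + x * (d - 1)| + (d - 1) * (s * |b - x|) ≤ d * (s * |b|) := by
  have hd₁ : (d - 1) * |b - x| = |d * b - (b + x * (d - 1))| := by
    rw [← abs_of_nonneg (sub_nonneg.2 hd), ← abs_mul, abs_of_nonneg (sub_nonneg.2 hd)]
    ring_nf
  have hd₀ : d * |b| = |d * b| := by rw [abs_mul, abs_of_nonneg (zero_le_one.trans hd)]
  rcases hs with rfl | rfl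
  · linarith [abs_sub (d * b) (b + x * (d - 1))]
  · linarith [abs_sub_abs_le_abs_sub (d * b) (b + x * (d - 1))]

theorem sum_peakSign_mul_abs_spikeMartingale_nonpos (hD : ∀ n, 0 < D n) (n : ℕ) :
    ∑ i ∈ range (adicScale D n), peakSign D n i * |spikeMartingale D a n i| ≤ 0 := by
  induction n with
  | zero => simp [spikeMartingale]
  | succ n ih =>
    have hchildren (i : ℕ) : peakSign D (n + 1) i * |spikeMartingale D a (n + 1) i| =
        if D n ∣ i then -|spikeMartingale D a n (i / D n) + a n (i / D n) * (D n - 1)|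
        else peakSign D n (i / D n) * |spikeMartingale D a n (i / D n) - a n (i / D n)| := by
      rw [peakSign, spikeMartingale_succ]
      split_ifs <;> simp
    simp only [hchildren, adicScale_succ]
    rw [sum_range_mul_ite_dvd _ (hD n)
      (fun j ↦ -|spikeMartingale D a n j + a n j * (D n - 1)|)
      fun j ↦ peakSign D n j * |spikeMartingale D a n j - a n j|]
    calc _ ≤ ∑ j ∈ range (adicScale D n), D n * (peakSign D n j * |spikeMartingale D a n j|) :=
          sum_le_sum fun j _ ↦ neg_abs_add_mul_sign_mul_abs_le
            (by exact_mod_cast hD n) (peakSign_eq_one_or_neg_one n j) _ _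
      _ ≤ 0 := by
          rw [← mul_sum]
          exact mul_nonpos_of_nonneg_of_nonpos (Nat.cast_nonneg _) ih

theorem integral_spikeMartingale_adicCell (hD : ∀ n, 0 < D n) (n : ℕ) :
    ∫ t, spikeMartingale D a n (adicCell D n t) ∂muI = 0 := by
  rw [integral_comp_adicCell hD, sum_spikeMartingale a hD, zero_div]

theorem setIntegral_compl_peakSet_abs_spikeMartingale_le (hD : ∀ n, 0 < D n) (n : ℕ) :
    ∫ t in (peakSet D)ᶜ, |spikeMartingale D a n (adicCell D n t)| ∂muI ≤
      ∫ t in peakSet D, |spikeMartingale D a n (adicCell D n t)| ∂muI := by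
  let absMart (t : ℝ) : ℝ := |spikeMartingale D a n (adicCell D n t)|
  let signed (t : ℝ) : ℝ := peakSign D n (adicCell D n t) * absMart t
  have hP : MeasurableSet (peakSet D) := measurableSet_peakSet D
  have habs : Integrable absMart muI :=
    integrable_comp_adicCell hD n fun i ↦ |spikeMartingale D a n i|
  have hsigned : Integrable signed muI :=
    integrable_comp_adicCell hD n fun i ↦ peakSign D n i * |spikeMartingale D a n i|
  have hnonpos : ∫ t, signed t ∂muI ≤ 0 := by
    rw [integral_comp_adicCell hD n fun i ↦ peakSign D n i * |spikeMartingale D a n i|]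
    exact div_nonpos_of_nonpos_of_nonneg
      (sum_peakSign_mul_abs_spikeMartingale_nonpos a hD n) (Nat.cast_nonneg _)
  have hcompl : ∫ t in (peakSet D)ᶜ, signed t ∂muI = ∫ t in (peakSet D)ᶜ, absMart t ∂muI :=
    setIntegral_congr_fun hP.compl fun t ht ↦ by
      simp only [signed, peakSign_adicCell_of_notMem_peakSet hD n ht, one_mul]
  have hpeak : -∫ t in peakSet D, absMart t ∂muI ≤ ∫ t in peakSet D, signed t ∂muI := by
    rw [← integral_neg]
    refine integral_mono habs.integrableOn.neg hsigned.integrableOn fun t ↦ ?_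
    have h₀ : 0 ≤ absMart t := abs_nonneg _
    rcases peakSign_eq_one_or_neg_one (D := D) n (adicCell D n t) with h | h <;>
      simp only [signed, h] <;> linarith
  linarith [integral_add_compl hP hsigned]

end SpikeMartingale

section L1

variable {α E : Type*} [MeasurableSpace α] {μ : Measure α} [NormedAddCommGroup E]
  [NormedSpace ℝ E] [CompleteSpace E]

/-- Integration over `s` as a continuous linear map on `L¹`. -/
noncomputable def setIntegralCLM (μ : Measure α) (s : Set α) : Lp E 1 μ →L[ℝ] E :=
  L1.integralCLM ∘L LpToLpRestrictCLM α E ℝ μ 1 s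

theorem setIntegralCLM_apply (s : Set α) (f : Lp E 1 μ) :
    setIntegralCLM μ s f = ∫ t in s, f t ∂μ := by
  rw [setIntegralCLM, ContinuousLinearMap.comp_apply, ← L1.integral_eq, L1.integral_eq_integral]
  exact integral_congr_ae (LpToLpRestrictCLM_coeFn ℝ s f)

theorem norm_setIntegralCLM_le_one (s : Set α) : ‖setIntegralCLM (E := E) μ s‖ ≤ 1 := by
  refine ContinuousLinearMap.opNorm_le_bound _ zero_le_one fun f ↦ ?_
  rw [one_mul, setIntegralCLM_apply, L1.norm_eq_integral_norm]
  exact (norm_integral_le_integral_norm _).trans <| setIntegral_le_integral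
    (L1.integrable_coeFn f).norm (.of_forall fun _ ↦ norm_nonneg _)

theorem norm_setIntegralCLM_comp_subtypeL_le_one (s : Set α) (Y : Submodule ℝ (Lp E 1 μ)) :
    ‖setIntegralCLM μ s ∘L Y.subtypeL‖ ≤ 1 :=
  (ContinuousLinearMap.opNorm_comp_le _ _).trans <| mul_le_one₀
    (norm_setIntegralCLM_le_one s) (norm_nonneg Y.subtypeL) (Submodule.norm_subtypeL_le Y)

variable [IsFiniteMeasure μ]

theorem setIntegralCLM_const (s : Set α) (c : E) :
    setIntegralCLM μ s (Lp.const 1 μ c) = μ.real s • c := by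
  rw [setIntegralCLM_apply, integral_congr_ae (ae_restrict_of_ae (Lp.coeFn_const 1 μ c)),
    ← setIntegral_const]
  rfl

theorem coeFn_sub_const (f : Lp ℝ 1 μ) (c : ℝ) : ⇑(f - Lp.const 1 μ c) =ᵐ[μ] fun t ↦ f t - c := by
  filter_upwards [Lp.coeFn_sub f (Lp.const 1 μ c), Lp.coeFn_const 1 μ c] with t hsub hconst
  rw [hsub, Pi.sub_apply, hconst, Function.const_apply]

theorem norm_sub_const_eq_integral (f : Lp ℝ 1 μ) (c : ℝ) :
    ‖f - Lp.const 1 μ c‖ = ∫ t, |f t - c| ∂μ := by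
  rw [L1.norm_eq_integral_norm]
  refine integral_congr_ae ?_
  filter_upwards [coeFn_sub_const f c] with t ht
  rw [ht, Real.norm_eq_abs]

theorem continuous_setIntegral_abs_sub_mean (s : Set α) :
    Continuous fun f : Lp ℝ 1 μ ↦ ∫ t in s, |f t - ∫ x, f x ∂μ| ∂μ := by
  have hcenter : Continuous fun f : Lp ℝ 1 μ ↦ f - Lp.const 1 μ (∫ x, f x ∂μ) :=
    continuous_id.sub ((Lp.constL 1 μ ℝ).continuous.comp continuous_integral)
  have habs : Continuous fun f : Lp ℝ 1 μ ↦ |f - Lp.const 1 μ (∫ x, f x ∂μ)| :=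
    hcenter.sup hcenter.neg
  convert (continuous_setIntegral s).comp habs using 1
  ext f
  refine integral_congr_ae (ae_restrict_of_ae ?_)
  filter_upwards [Lp.coeFn_abs (f - Lp.const 1 μ (∫ x, f x ∂μ)),
    coeFn_sub_const f (∫ x, f x ∂μ)] with t habs hsub
  rw [habs, hsub]

end L1

section Slice

variable {α : Type*} [MeasurableSpace α] {μ : Measure α} {P : Set α} {f : α → ℝ} {ε : ℝ}

theorem setIntegral_abs_le_of_le_setIntegral_compl (hP : MeasurableSet P) (hf : Integrable f μ)
    (hnorm : ∫ t, |f t| ∂μ ≤ 1) (hslice : 1 - ε ≤ ∫ t in Pᶜ, f t ∂μ) :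
    ∫ t in P, |f t| ∂μ ≤ ε := by
  have hmono : ∫ t in Pᶜ, f t ∂μ ≤ ∫ t in Pᶜ, |f t| ∂μ :=
    integral_mono hf.integrableOn hf.abs.integrableOn fun t ↦ le_abs_self (f t)
  linarith [integral_add_compl hP hf.abs]

theorem le_integral_of_le_setIntegral_compl (hP : MeasurableSet P) (hf : Integrable f μ)
    (hnorm : ∫ t, |f t| ∂μ ≤ 1) (hslice : 1 - ε ≤ ∫ t in Pᶜ, f t ∂μ) :
    1 - 2 * ε ≤ ∫ t, f t ∂μ := by
  linarith [integral_add_compl hP hf, neg_abs_le (∫ t in P, f t ∂μ),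
    abs_integral_le_integral_abs (f := f) (μ := μ.restrict P),
    setIntegral_abs_le_of_le_setIntegral_compl hP hf hnorm hslice]

theorem integral_abs_sub_le_add [IsProbabilityMeasure μ] (hf : Integrable f μ) (c d : ℝ) :
    ∫ t, |f t - d| ∂μ ≤ ∫ t, |f t - c| ∂μ + |c - d| := by
  have hfc : Integrable (fun t ↦ |f t - c|) μ := (hf.sub (integrable_const c)).abs
  calc ∫ t, |f t - d| ∂μ ≤ ∫ t, (|f t - c| + |c - d|) ∂μ :=
        integral_mono (hf.sub (integrable_const d)).abs (hfc.add (integrable_const _))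
          fun t ↦ abs_sub_le _ _ _
    _ = ∫ t, |f t - c| ∂μ + |c - d| := by
        rw [integral_add hfc (integrable_const _)]
        simp

theorem setIntegral_abs_sub_le_add [IsFiniteMeasure μ] (hf : Integrable f μ) (c : ℝ) :
    ∫ t in P, |f t - c| ∂μ ≤ ∫ t in P, |f t| ∂μ + |c| * μ.real P := by
  calc ∫ t in P, |f t - c| ∂μ ≤ ∫ t in P, (|f t| + |c|) ∂μ :=
        integral_mono (hf.sub (integrable_const c)).abs.integrableOn
          (hf.abs.add (integrable_const _)).integrableOn fun t ↦ abs_sub _ _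
    _ = ∫ t in P, |f t| ∂μ + |c| * μ.real P := by
        rw [integral_add hf.abs.integrableOn (integrable_const _)]
        simp [mul_comm]

theorem integral_abs_sub_one_le [IsProbabilityMeasure μ] (hP : MeasurableSet P)
    (hPsmall : μ.real P ≤ 1 / 6) (hf : Integrable f μ)
    (hmean : ∫ t in Pᶜ, |f t - ∫ x, f x ∂μ| ∂μ ≤ ∫ t in P, |f t - ∫ x, f x ∂μ| ∂μ)
    (hnorm : ∫ t, |f t| ∂μ ≤ 1) (hslice : 1 - 2 * μ.real P ≤ ∫ t in Pᶜ, f t ∂μ) :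
    ∫ t, |f t - 1| ∂μ ≤ 2 - 2 * μ.real P := by
  set p := μ.real P
  set c := ∫ t, f t ∂μ
  have hp : 0 ≤ p := measureReal_nonneg
  have hc_le : c ≤ 1 := (le_abs_self _).trans (abs_integral_le_integral_abs.trans hnorm)
  have hc_ge : 1 - 2 * (2 * p) ≤ c := le_integral_of_le_setIntegral_compl hP hf hnorm hslice
  have hcenter : ∫ t, |f t - c| ∂μ ≤ 2 * (2 * p + c * p) := by
    have hsplit := integral_add_compl hP (hf.sub (integrable_const c)).abs
    have hpeak := setIntegral_abs_sub_le_add (P := P) hf c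
    rw [abs_of_nonneg (by linarith : 0 ≤ c)] at hpeak
    have := setIntegral_abs_le_of_le_setIntegral_compl hP hf hnorm hslice
    simp only [Pi.sub_apply] at hsplit
    linarith
  have htriangle := integral_abs_sub_le_add hf c 1
  rw [abs_of_nonpos (by linarith : c - 1 ≤ 0)] at htriangle
  have hcp : c * p ≤ p := mul_le_of_le_one_left hp hc_le
  linarith

end Slice

section YN

/-- The number of cells of generation `n + 1` in a cell of generation `n` in the construction of
`Y_N`, whose cells of generation `n` have length `2 ^ (-expn N n)`. -/
def ratio (N n : ℕ) : ℕ := 2 ^ (N ^ (n + 1) - expn N n)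

/-- The functions spanning a dense subspace of `Y_N`. -/
def generators (N : ℕ) : Set (Lp ℝ 1 muI) :=
  {f | (∃ c : ℝ, ∀ᵐ t ∂muI, f t = c) ∨
    ∃ n k : ℕ, 1 ≤ k ∧ k ≤ 2 ^ expn N n ∧ ∀ᵐ t ∂muI, f t = gNK N n k t}

variable {N : ℕ}

theorem ratio_pos (N n : ℕ) : 0 < ratio N n := Nat.two_pow_pos _

theorem expn_succ (N n : ℕ) : expn N (n + 1) = N ^ (n + 1) := if_neg n.succ_ne_zero

theorem expn_le_pow_succ (N n : ℕ) : expn N n ≤ N ^ (n + 1) := by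
  cases n with
  | zero => exact Nat.zero_le _
  | succ n =>
    rw [expn_succ, pow_succ N (n + 1), pow_succ, mul_assoc]
    exact Nat.mul_le_mul_left _ (Nat.le_mul_self N)

theorem expn_lt_pow_succ (hN : 2 ≤ N) (n : ℕ) : expn N n < N ^ (n + 1) := by
  cases n with
  | zero => exact Nat.pow_pos (by omega)
  | succ n => exact expn_succ N n ▸ Nat.pow_lt_pow_right hN (Nat.lt_succ_self _)

theorem adicScale_ratio (N n : ℕ) : adicScale (ratio N) n = 2 ^ expn N n := by
  induction n with
  | zero => rfl
  | succ n ih =>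
    rw [adicScale_succ, ih, ratio, ← pow_add, expn_succ,
      Nat.add_sub_cancel' (expn_le_pow_succ N n)]

theorem two_le_ratio (hN : 2 ≤ N) (n : ℕ) : 2 ≤ ratio N n :=
  Nat.le_self_pow (Nat.sub_pos_of_lt (expn_lt_pow_succ hN n)).ne' 2

theorem expn_add_mul_succ_le (hN : 3 ≤ N) (n : ℕ) : expn N n + N * (n + 1) ≤ N ^ (n + 1) := by
  cases n with
  | zero => simp [expn]
  | succ n =>
    have hn : n + 1 ≤ N ^ n := Nat.lt_pow_self (by omega)
    calc expn N (n + 1) + N * (n + 1 + 1) ≤ N * N ^ n + N * (N ^ n + N ^ n) := by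
          rw [expn_succ, pow_succ']
          gcongr
          omega
      _ = 3 * N ^ (n + 1) := by ring
      _ ≤ N ^ (n + 1 + 1) := by
          rw [pow_succ' N (n + 1)]
          gcongr

theorem measureReal_peakSet_ratio_le (hN : 3 ≤ N) :
    muI.real (peakSet (ratio N)) ≤ 1 / (2 ^ N - 1) := by
  have hpow : (1 : ℝ) < 2 ^ N := one_lt_pow₀ one_lt_two (by omega)
  have hgeom : HasSum (fun n ↦ ((2 : ℝ) ^ N)⁻¹ * ((2 : ℝ) ^ N)⁻¹ ^ n) (1 / (2 ^ N - 1)) := by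
    have hvalue : 1 / ((2 : ℝ) ^ N - 1) = ((2 : ℝ) ^ N)⁻¹ * (1 - ((2 : ℝ) ^ N)⁻¹)⁻¹ := by
      rw [← mul_inv, mul_one_sub, mul_inv_cancel₀ (by positivity), one_div]
    rw [hvalue]
    exact (hasSum_geometric_of_lt_one (by positivity) (inv_lt_one_of_one_lt₀ hpow)).mul_left _
  have hterm (n : ℕ) : 1 / (ratio N n : ℝ) ≤ ((2 : ℝ) ^ N)⁻¹ * ((2 : ℝ) ^ N)⁻¹ ^ n := by
    rw [← pow_succ', inv_pow, ← pow_mul, one_div, ratio, Nat.cast_pow, Nat.cast_ofNat]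
    gcongr
    · exact one_le_two
    · have := expn_add_mul_succ_le hN n
      omega
  have hsum : Summable fun n ↦ 1 / (ratio N n : ℝ) :=
    .of_nonneg_of_le (fun n ↦ by positivity) hterm hgeom.summable
  exact (measureReal_peakSet_le_tsum (ratio_pos N) hsum).trans
    (hsum.tsum_le_tsum hterm hgeom.summable |>.trans_eq hgeom.tsum_eq)

theorem gNK_succ_eq_ite_spike (N n j : ℕ) {t : ℝ} (ht : 0 ≤ t) :
    gNK N n (j + 1) t =
      if adicCell (ratio N) n t = j then spike (ratio N n) (adicCell (ratio N) (n + 1) t)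
      else 0 := by
  have hr : (0 : ℝ) < ratio N n := by exact_mod_cast ratio_pos N n
  have hs : (0 : ℝ) < adicScale (ratio N) n := by exact_mod_cast adicScale_pos (ratio_pos N) n
  have hscale : (2 : ℝ) ^ expn N n = adicScale (ratio N) n := by
    exact_mod_cast (adicScale_ratio N n).symm
  have hscale_succ : (2 : ℝ) ^ N ^ (n + 1) = adicScale (ratio N) n * ratio N n := by
    rw [← expn_succ]
    exact_mod_cast (adicScale_ratio N (n + 1)).symm.trans (adicScale_succ n)
  have hcell : t - j / adicScale (ratio N) n ∈ Set.Ico 0 (1 / (adicScale (ratio N) n : ℝ)) ↔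
      adicCell (ratio N) n t = j :=
    sub_div_mem_Ico_iff_floor_mul_eq hs ht j
  have hchild : t - j / adicScale (ratio N) n ∈
      Set.Ico 0 (1 / (adicScale (ratio N) n * ratio N n : ℝ)) ↔
      adicCell (ratio N) n t = j ∧ t ∈ peak (ratio N) n := by
    rw [← adicCell_succ_eq_mul_iff (ratio_pos N n), adicCell, adicScale_succ, Nat.cast_mul,
      ← sub_div_mem_Ico_iff_floor_mul_eq (mul_pos hs hr) ht, Nat.cast_mul,
      mul_div_mul_right _ _ hr.ne']
  simp only [gNK, Nat.cast_add_one, add_sub_cancel_right, hscale, hscale_succ, hcell, hchild,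
    mul_div_cancel_left₀ _ hs.ne', spike, peak, Set.mem_ofPred_eq]
  split_ifs <;> simp_all

theorem sum_gNK_eq_spike (N n : ℕ) {t : ℝ} (ht : t ∈ Set.Ico (0 : ℝ) 1) :
    ∑ k ∈ Icc 1 (2 ^ expn N n), gNK N n k t =
      spike (ratio N n) (adicCell (ratio N) (n + 1) t) := by
  have hlt := adicCell_lt (ratio_pos N) n ht
  calc ∑ k ∈ Icc 1 (2 ^ expn N n), gNK N n k t
      = ∑ j ∈ range (adicScale (ratio N) n), gNK N n (j + 1) t := by
        rw [adicScale_ratio N, range_eq_Ico, sum_Ico_add' (fun k ↦ gNK N n k t)]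
        rfl
    _ = _ := by simp [gNK_succ_eq_ite_spike N n _ ht.1, hlt]

theorem spike_pos_iff {d : ℕ} (hd : 2 ≤ d) (i : ℕ) : 0 < spike d i ↔ d ∣ i := by
  have : (2 : ℝ) ≤ d := by exact_mod_cast hd
  rw [spike]
  split_ifs with h <;> simp only [h, iff_true, iff_false] <;> linarith

theorem Pset_ae_eq_peakSet (hN : 2 ≤ N) : Pset N =ᵐ[muI] peakSet (ratio N) := by
  filter_upwards [ae_muI_mem_Ico] with t ht
  refine propext ?_
  change t ∈ Pset N ↔ t ∈ peakSet (ratio N)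
  simp only [Pset, peakSet, peak, Set.mem_iUnion, Set.mem_ofPred_eq,
    sum_gNK_eq_spike N _ ht, spike_pos_iff (two_le_ratio hN _)]

theorem exists_eq_const_add_spikeMartingale {f : Lp ℝ 1 muI}
    (hf : f ∈ Submodule.span ℝ (generators N)) :
    ∃ (c : ℝ) (a : ℕ → ℕ → ℝ), ∀ᶠ n in atTop,
      f =ᵐ[muI] fun t ↦ c + spikeMartingale (ratio N) a n (adicCell (ratio N) n t) := by
  simp only [spikeMartingale_adicCell _ (ratio_pos N)]
  induction hf using Submodule.span_induction with
  | mem f hf =>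
    rcases hf with ⟨c, hc⟩ | ⟨n, k, hk, -, hg⟩
    · refine ⟨c, 0, .of_forall fun n ↦ ?_⟩
      filter_upwards [hc] with t ht
      simp [ht]
    · obtain ⟨j, rfl⟩ := Nat.exists_eq_add_of_le' hk
      refine ⟨0, Pi.single n (Pi.single j 1), ?_⟩
      filter_upwards [eventually_gt_atTop n] with m hm
      filter_upwards [hg, ae_muI_mem_Ico] with t hgt ht
      rw [hgt, gNK_succ_eq_ite_spike N n j ht.1, zero_add,
        sum_eq_single_of_mem n (mem_range.2 hm) fun l _ hl ↦ by simp [hl]]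
      simp [Pi.single_apply]
  | zero =>
    refine ⟨0, 0, .of_forall fun n ↦ ?_⟩
    filter_upwards [Lp.coeFn_zero ℝ 1 muI] with t ht
    rw [ht]
    simp
  | add f g _ _ hf hg =>
    obtain ⟨c, a, hf⟩ := hf
    obtain ⟨d, b, hg⟩ := hg
    refine ⟨c + d, a + b, ?_⟩
    filter_upwards [hf, hg] with n hfn hgn
    filter_upwards [Lp.coeFn_add f g, hfn, hgn] with t hadd hft hgt
    simp only [hadd, Pi.add_apply, hft, hgt, add_mul, sum_add_distrib]
    ring
  | smul r f _ hf =>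
    obtain ⟨c, a, hf⟩ := hf
    refine ⟨r * c, r • a, ?_⟩
    filter_upwards [hf] with n hfn
    filter_upwards [Lp.coeFn_smul r f, hfn] with t hsmul hft
    simp only [hsmul, Pi.smul_apply, hft, smul_eq_mul, mul_assoc, ← mul_sum]
    ring

theorem setIntegral_compl_abs_sub_mean_le_of_mem_span {f : Lp ℝ 1 muI}
    (hf : f ∈ Submodule.span ℝ (generators N)) :
    ∫ t in (peakSet (ratio N))ᶜ, |f t - ∫ x, f x ∂muI| ∂muI ≤
      ∫ t in peakSet (ratio N), |f t - ∫ x, f x ∂muI| ∂muI := by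
  obtain ⟨c, a, hca⟩ := exists_eq_const_add_spikeMartingale hf
  obtain ⟨n, hfn⟩ := hca.exists
  have hmean : ∫ x, f x ∂muI = c := by
    rw [integral_congr_ae hfn, integral_add (integrable_const c)
      (integrable_comp_adicCell (ratio_pos N) n _),
      integral_spikeMartingale_adicCell a (ratio_pos N)]
    simp
  have hcenter (s : Set ℝ) : ∫ t in s, |f t - c| ∂muI =
      ∫ t in s, |spikeMartingale (ratio N) a n (adicCell (ratio N) n t)| ∂muI := by
    refine integral_congr_ae (ae_restrict_of_ae ?_)
    filter_upwards [hfn] with t ht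
    rw [ht, add_sub_cancel_left]
  rw [hmean, hcenter, hcenter]
  exact setIntegral_compl_peakSet_abs_spikeMartingale_le a (ratio_pos N) n

theorem setIntegral_compl_abs_sub_mean_le_of_mem_YN {f : Lp ℝ 1 muI} (hf : f ∈ YN N) :
    ∫ t in (peakSet (ratio N))ᶜ, |f t - ∫ x, f x ∂muI| ∂muI ≤
      ∫ t in peakSet (ratio N), |f t - ∫ x, f x ∂muI| ∂muI :=
  closure_minimal (fun _ ↦ setIntegral_compl_abs_sub_mean_le_of_mem_span)
    (isClosed_le (continuous_setIntegral_abs_sub_mean _) (continuous_setIntegral_abs_sub_mean _)) hf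

theorem const_mem_YN (N : ℕ) (c : ℝ) : Lp.const 1 muI c ∈ YN N :=
  Submodule.le_topologicalClosure _ (Submodule.subset_span (.inl ⟨c, Lp.coeFn_const 1 muI c⟩))

theorem measureReal_peakSet_ratio_le_one_sixth (hN : 3 ≤ N) :
    muI.real (peakSet (ratio N)) ≤ 1 / 6 := by
  have hpow : (2 : ℝ) ^ 3 ≤ 2 ^ N := pow_le_pow_right₀ one_le_two hN
  exact (measureReal_peakSet_ratio_le hN).trans
    (one_div_le_one_div_of_le (by norm_num) (by linarith))

theorem norm_sub_one_le_of_mem_YN (hN : 3 ≤ N) {f : Lp ℝ 1 muI} (hf : f ∈ YN N)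
    (hnorm : ‖f‖ ≤ 1)
    (hslice : 1 - 2 * muI.real (peakSet (ratio N)) ≤ ∫ t in (peakSet (ratio N))ᶜ, f t ∂muI) :
    ‖f - Lp.const 1 muI 1‖ ≤ 2 - 2 * muI.real (peakSet (ratio N)) := by
  rw [norm_sub_const_eq_integral]
  rw [L1.norm_eq_integral_norm] at hnorm
  exact integral_abs_sub_one_le (measurableSet_peakSet _)
    (measureReal_peakSet_ratio_le_one_sixth hN) (L1.integrable_coeFn f)
    (setIntegral_compl_abs_sub_mean_le_of_mem_YN hf) hnorm hslice

end YN

theorem stmt_19_general (N : ℕ) (hN : 3 ≤ N) :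
    ∃ (g : YN N →L[ℝ] ℝ) (ε : ℝ) (one : Lp ℝ 1 muI),
      ‖g‖ ≤ 1 ∧ 0 < ε ∧ ε = 2 * (muI (Pset N)).toReal ∧
      (∀ᵐ t ∂muI, one t = 1) ∧
      (∀ f : YN N, g f = ∫ t, (f : Lp ℝ 1 muI) t ∂(muI.restrict (Pset N)ᶜ)) ∧
      (∃ f : YN N, ‖(f : Lp ℝ 1 muI)‖ ≤ 1 ∧ 1 - ε ≤ g f) ∧
      (∀ f : YN N, ‖(f : Lp ℝ 1 muI)‖ ≤ 1 → 1 - ε ≤ g f →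
        ‖(f : Lp ℝ 1 muI) - one‖ ≤ 2 - ε) := by
  let P := peakSet (ratio N)
  let one : Lp ℝ 1 muI := Lp.const 1 muI 1
  have hPset : Pset N =ᵐ[muI] P := Pset_ae_eq_peakSet (Nat.le_of_succ_le hN)
  have hpos : 0 < muI.real P := measureReal_peakSet_pos (ratio_pos N)
  have hone_norm : ‖one‖ ≤ 1 := by
    simpa using Lp.norm_const_le (p := 1) (μ := muI) (c := (1 : ℝ))
  have hone_slice : 1 - 2 * muI.real P ≤ setIntegralCLM muI Pᶜ one := by
    rw [setIntegralCLM_const, smul_eq_mul, mul_one,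
      probReal_compl_eq_one_sub (measurableSet_peakSet _)]
    linarith
  refine ⟨setIntegralCLM muI Pᶜ ∘L (YN N).subtypeL, 2 * muI.real P, one,
    norm_setIntegralCLM_comp_subtypeL_le_one _ _, by positivity,
    by rw [measure_congr hPset, measureReal_def], Lp.coeFn_const 1 muI 1, fun f ↦ ?_,
    ⟨⟨one, const_mem_YN N 1⟩, hone_norm, hone_slice⟩, fun f hf hgf ↦ ?_⟩
  · rw [Measure.restrict_congr_set hPset.compl]
    exact setIntegralCLM_apply _ _
  · exact norm_sub_one_le_of_mem_YN hN f.2 hf (hgf.trans_eq (setIntegralCLM_apply _ _))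

/-- For `N ≥ 4` the subspace `Y_N` of `L₁[0,1]` fails the Daugavet property: the functional
`g* = ∫ · χ_{[0,1]∖P}` has norm `≤ 1` on `Y_N`, the slice `S(g*, ε)` of `B(Y_N)` with
`ε = 2·|P|` is nonempty, yet every `f` in this slice satisfies `‖f - 1‖ ≤ 2 - ε`. -/
theorem stmt_19 (N : ℕ) (hN : 4 ≤ N) :
    ∃ (g : YN N →L[ℝ] ℝ) (ε : ℝ) (one : Lp ℝ 1 muI),
      ‖g‖ ≤ 1 ∧ 0 < ε ∧ ε = 2 * (muI (Pset N)).toReal ∧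
      (∀ᵐ t ∂muI, one t = 1) ∧
      (∀ f : YN N, g f = ∫ t, (f : Lp ℝ 1 muI) t ∂(muI.restrict (Pset N)ᶜ)) ∧
      (∃ f : YN N, ‖(f : Lp ℝ 1 muI)‖ ≤ 1 ∧ 1 - ε ≤ g f) ∧
      (∀ f : YN N, ‖(f : Lp ℝ 1 muI)‖ ≤ 1 → 1 - ε ≤ g f →
        ‖(f : Lp ℝ 1 muI) - one‖ ≤ 2 - ε) :=
  stmt_19_general N (Nat.le_of_succ_le hN)
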